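/- Let σ = {a, b, c}, let Q be the RPQ with L(Q) = {a bⁿ a : n ≥ 0} ∪ {a cⁿ a : n ≥ 0}, and let V = {V₁, V₂, V₃} be the RPQ view with L(V₁) = {a bⁿ : n ≥ 0}, L(V₂) = {a cⁿ : n ≥ 0}, and L(V₃) = {bⁿ a : n ≥ 0} ∪ {cⁿ a : n ≥ 0}. Define the query R over τ-structures by: (x,y) ∈ R(S) iff there exists a node z with (x,z) in the V₁-relation of S, (x,z) in the V₂-relation of S, and (z,y) in the V₃-relation of S. Then R is a rewriting of Q using V: for every finite graph database D over σ, R(V(D)) = Q(D). In particular, V determines Q in a monotone way. -/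

import Mathlib

/-!
If `x` reaches `z` along both `ab*` and `ac*`, then whichever of `b*a` or `c*a` leads
from `z` to `y`, it extends the matching
path to `z` into a path labelled in `ab*a` or `ac*a`. Conversely, on a path witnessing `Q`, the node
right after the first `a` serves as `z`, since `a` itself belongs to both `ab*` and `ac*`.
Monotonicity follows because `R` is a positive existential query over the views.
-/

/-- A graph database over alphabet `σ`: a finite set of nodes (drawn from `ℕ`)
together with a binary edge relation for each letter of `σ`. -/
structure GDB (σ : Type) where
  nodes : Finset ℕ
  edge : σ → ℕ → ℕ → Prop
  edge_mem : ∀ a x y, edge a x y → x ∈ nodes ∧ y ∈ nodes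

/-- `D.HasPath x w y`: there is a path from `x` to `y` in `D` whose label is `w`. -/
inductive GDB.HasPath {σ : Type} (D : GDB σ) : ℕ → List σ → ℕ → Prop
  | nil {x : ℕ} : x ∈ D.nodes → GDB.HasPath D x [] x
  | cons {x y z : ℕ} {a : σ} {w : List σ} :
      D.edge a x y → GDB.HasPath D y w z → GDB.HasPath D x (a :: w) z

/-- The path query defined by a language `L`: pairs of nodes connected by a
path whose label belongs to `L`. -/
def pathQuery {σ : Type} (L : Set (List σ)) (D : GDB σ) (x y : ℕ) : Prop :=
  ∃ w ∈ L, D.HasPath x w y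

/-- The three-letter alphabet `{a, b, c}`. -/
inductive ABC | a | b | c
deriving DecidableEq

/-- `L(Q) = ab*a | ac*a`. -/
def LQ14 : Set (List ABC) :=
  {w | ∃ n : ℕ, w = ABC.a :: List.replicate n ABC.b ++ [ABC.a]} ∪
  {w | ∃ n : ℕ, w = ABC.a :: List.replicate n ABC.c ++ [ABC.a]}

/-- `L(V₁) = ab*`. -/
def LV1 : Set (List ABC) := {w | ∃ n : ℕ, w = ABC.a :: List.replicate n ABC.b}

/-- `L(V₂) = ac*`. -/
def LV2 : Set (List ABC) := {w | ∃ n : ℕ, w = ABC.a :: List.replicate n ABC.c}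

/-- `L(V₃) = b*a | c*a`. -/
def LV3 : Set (List ABC) :=
  {w | ∃ n : ℕ, w = List.replicate n ABC.b ++ [ABC.a]} ∪
  {w | ∃ n : ℕ, w = List.replicate n ABC.c ++ [ABC.a]}

theorem GDB.HasPath.append {σ : Type} {D : GDB σ} {x y z : ℕ} {u v : List σ}
    (h : D.HasPath x u y) (h' : D.HasPath y v z) : D.HasPath x (u ++ v) z := by
  induction h with
  | nil _ => exact h'
  | cons e _ ih => exact .cons e (ih h')

theorem rewriting_iff (D : GDB ABC) (x y : ℕ) :
    (∃ z, pathQuery LV1 D x z ∧ pathQuery LV2 D x z ∧ pathQuery LV3 D z y) ↔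
      pathQuery LQ14 D x y := by
  constructor
  · rintro ⟨z, ⟨_, ⟨n, rfl⟩, h₁⟩, ⟨_, ⟨m, rfl⟩, h₂⟩, ⟨_, ⟨k, rfl⟩ | ⟨k, rfl⟩, h₃⟩⟩
    · refine ⟨_, Or.inl ⟨n + k, ?_⟩, h₁.append h₃⟩
      simp [← List.append_assoc]
    · refine ⟨_, Or.inr ⟨m + k, ?_⟩, h₂.append h₃⟩
      simp [← List.append_assoc]
  · rintro ⟨w, hw, h⟩
    -- Both branches of `L(Q)` have the form `a · L(V₃)`.
    obtain ⟨v, hv, rfl⟩ : ∃ v ∈ LV3, w = ABC.a :: v := by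
      rcases hw with ⟨n, rfl⟩ | ⟨n, rfl⟩
      · exact ⟨_, Or.inl ⟨n, rfl⟩, rfl⟩
      · exact ⟨_, Or.inr ⟨n, rfl⟩, rfl⟩
    cases h with
    | @cons _ z _ _ _ e p =>
      have ha : D.HasPath x [ABC.a] z := .cons e (.nil (D.edge_mem _ _ _ e).2)
      exact ⟨z, ⟨_, ⟨0, rfl⟩, ha⟩, ⟨_, ⟨0, rfl⟩, ha⟩, ⟨v, hv, p⟩⟩

/-- `R(x,y) = ∃z, V₁(x,z) ∧ V₂(x,z) ∧ V₃(z,y)` is a rewriting of `Q`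
using `V`; in particular `V` determines `Q` in a monotone way. -/
theorem stmt14 :
    (∀ (D : GDB ABC) (x y : ℕ),
        (∃ z, pathQuery LV1 D x z ∧ pathQuery LV2 D x z ∧ pathQuery LV3 D z y) ↔
          pathQuery LQ14 D x y) ∧
    (∀ D D' : GDB ABC,
        (∀ x y, pathQuery LV1 D x y → pathQuery LV1 D' x y) →
        (∀ x y, pathQuery LV2 D x y → pathQuery LV2 D' x y) →
        (∀ x y, pathQuery LV3 D x y → pathQuery LV3 D' x y) →
        ∀ x y, pathQuery LQ14 D x y → pathQuery LQ14 D' x y) := by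
  refine ⟨rewriting_iff, fun D D' h₁ h₂ h₃ x y hQ => ?_⟩
  obtain ⟨z, p₁, p₂, p₃⟩ := (rewriting_iff D x y).2 hQ
  exact (rewriting_iff D' x y).1 ⟨z, h₁ _ _ p₁, h₂ _ _ p₂, h₃ _ _ p₃⟩
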